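/- Let n ≥ 2, c > 0, and d ≥ 1/3. Then both functions φ̂^{c,d}(x,y) = log(1 + |x−y|/(c·((|x|^d + |y|^d)/2)^{1/d})) and φ̃^{c,d}(x,y) = |x−y| / (|x−y| + 2c·((|x|^d + |y|^d)/2)^{1/d}) are metrics on ℝⁿ \ {0}. -/

import Mathlib

/-- `f` is a metric on the subset `S`. -/
def IsMetricOn {E : Type*} (S : Set E) (f : E → E → ℝ) : Prop :=
  (∀ x ∈ S, ∀ y ∈ S, 0 ≤ f x y) ∧ (∀ x ∈ S, ∀ y ∈ S, (f x y = 0 ↔ x = y)) ∧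
  (∀ x ∈ S, ∀ y ∈ S, f x y = f y x) ∧
  (∀ x ∈ S, ∀ y ∈ S, ∀ z ∈ S, f x y ≤ f x z + f z y)

/-!
Both functions are `f ∘ ρ`, where `ρ x y = |x - y| / M(|x|, |y|)` is the relative distance of the
power mean `M` of exponent `d` and `f` is increasing and subadditive with `f 0 = 0`, so it suffices
that `ρ` is a metric. By Ptolemy's inequality `|x - y| |z| ≤ |x - z| |y| + |z - y| |x|`, its
triangle inequality reduces to the one on the half-line `(0, ∞)`. In logarithmic coordinates the
relative distance there is `2 g((p - q) / 2)` with `g s = sinh s / cosh (d s) ^ (1 / d)`. For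
`d ≥ 1/3` and `s ≥ 0` one has `sinh ((1 - 2 d) s) ≤ sinh (s / 3) ≤ sinh s / 3 ≤ d sinh s`, so
that `g` has nonpositive second derivative there; being concave with `g 0 = 0`, it is subadditive.
-/

open Set

lemma map_add_le_of_concaveOn {f : ℝ → ℝ} (hf : ConcaveOn ℝ (Ici 0) f) (hf₀ : 0 ≤ f 0) {s t : ℝ}
    (hs : 0 ≤ s) (ht : 0 ≤ t) : f (s + t) ≤ f s + f t := by
  rcases (add_nonneg hs ht).eq_or_lt with hst | hst
  · obtain ⟨rfl, rfl⟩ := (add_eq_zero_iff_of_nonneg hs ht).1 hst.symm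
    simpa only [add_zero, le_add_iff_nonneg_left] using hf₀
  have chord : ∀ {r q : ℝ}, 0 ≤ r → 0 ≤ q → r + q = s + t →
      r / (s + t) * f (s + t) ≤ f r := by
    intro r q hr hq hrq
    have h := hf.2 (mem_Ici.2 hst.le) (mem_Ici.2 le_rfl) (div_nonneg hr hst.le)
      (div_nonneg hq hst.le) (by rw [← add_div, hrq, div_self hst.ne'])
    simp only [smul_eq_mul, mul_zero, add_zero, div_mul_cancel₀ r hst.ne'] at h
    linarith [mul_nonneg (div_nonneg hq hst.le) hf₀]
  calc f (s + t) = s / (s + t) * f (s + t) + t / (s + t) * f (s + t) := by field_simp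
    _ ≤ f s + f t := add_le_add (chord hs ht rfl) (chord ht hs (add_comm t s))

namespace IsMetricOn

variable {E : Type*} {S : Set E} {ρ σ : E → E → ℝ}

lemma congr (hρ : IsMetricOn S ρ) (h : ∀ x ∈ S, ∀ y ∈ S, σ x y = ρ x y) : IsMetricOn S σ := by
  obtain ⟨nonneg, eq_zero, symm, triangle⟩ := hρ
  refine ⟨fun x hx y hy => ?_, fun x hx y hy => ?_, fun x hx y hy => ?_,
    fun x hx y hy z hz => ?_⟩
  · exact h x hx y hy ▸ nonneg x hx y hy
  · exact h x hx y hy ▸ eq_zero x hx y hy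
  · rw [h x hx y hy, h y hy x hx, symm x hx y hy]
  · rw [h x hx y hy, h x hx z hz, h z hz y hy]
    exact triangle x hx y hy z hz

lemma comp (hρ : IsMetricOn S ρ) {f : ℝ → ℝ} (hf₀ : ∀ t, 0 ≤ t → (f t = 0 ↔ t = 0))
    (hf : MonotoneOn f (Ici 0)) (hadd : ∀ s t, 0 ≤ s → 0 ≤ t → f (s + t) ≤ f s + f t) :
    IsMetricOn S (fun x y => f (ρ x y)) := by
  obtain ⟨nonneg, eq_zero, symm, triangle⟩ := hρ
  have map_zero : f 0 = 0 := (hf₀ 0 le_rfl).2 rfl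
  refine ⟨fun x hx y hy => ?_, fun x hx y hy => ?_, fun x hx y hy => ?_,
    fun x hx y hy z hz => ?_⟩
  · exact map_zero ▸ hf (mem_Ici.2 le_rfl) (nonneg x hx y hy) (nonneg x hx y hy)
  · exact (hf₀ _ (nonneg x hx y hy)).trans (eq_zero x hx y hy)
  · exact congrArg f (symm x hx y hy)
  · have hxz := nonneg x hx z hz
    have hzy := nonneg z hz y hy
    exact (hf (nonneg x hx y hy) (add_nonneg hxz hzy) (triangle x hx y hy z hz)).trans
      (hadd _ _ hxz hzy)

lemma log_one_add_div (hρ : IsMetricOn S ρ) {c : ℝ} (hc : 0 < c) :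
    IsMetricOn S (fun x y => Real.log (1 + ρ x y / c)) := by
  refine hρ.comp (f := fun t => Real.log (1 + t / c)) (fun t ht => ?_) (fun s hs t _ hst => ?_)
    (fun s t hs ht => ?_)
  · refine ⟨fun h => ?_, fun h => by simp [h]⟩
    have : 1 + t / c = 1 := Real.eq_one_of_pos_of_log_eq_zero (by positivity) h
    simpa [hc.ne'] using this
  · have : 0 ≤ s := hs
    dsimp only
    gcongr
  · rw [← Real.log_mul (by positivity) (by positivity)]
    refine Real.log_le_log (by positivity) ?_
    calc 1 + (s + t) / c ≤ 1 + (s + t) / c + s / c * (t / c) :=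
          le_add_of_nonneg_right (by positivity)
      _ = (1 + s / c) * (1 + t / c) := by ring

lemma div_add_const (hρ : IsMetricOn S ρ) {k : ℝ} (hk : 0 < k) :
    IsMetricOn S (fun x y => ρ x y / (ρ x y + k)) := by
  refine hρ.comp (f := fun t => t / (t + k)) (fun t ht => ?_) (fun s hs t ht hst => ?_)
    (fun s t hs ht => ?_)
  · have : t + k ≠ 0 := by positivity
    simp [this]
  · have hs₀ : 0 ≤ s := hs
    have ht₀ : 0 ≤ t := ht
    rw [div_le_div_iff₀ (by positivity) (by positivity)]
    linarith [mul_le_mul_of_nonneg_right hst hk.le]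
  · rw [add_div]
    gcongr <;> linarith

end IsMetricOn

/-- The distance of `x` and `y` relative to a mean `M` of their distances from the origin. -/
noncomputable def relativeDist {E : Type*} [NormedAddCommGroup E] (M : ℝ → ℝ → ℝ) (x y : E) : ℝ :=
  dist x y / M ‖x‖ ‖y‖

/-- Hästö's notion of a moderately increasing function, the natural class of weights `M` for
`relativeDist`: `M` is symmetric, and `M a t` increases with `t`, but at most linearly in the sense
that `t / M a t` increases too. Only positive arguments matter for the order conditions. -/
structure IsModeratelyIncreasing (M : ℝ → ℝ → ℝ) : Prop where
  pos : ∀ {a b}, 0 < a → 0 < b → 0 < M a b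
  symm : ∀ a b, M a b = M b a
  mono : ∀ {a b t}, 0 < a → 0 < b → b ≤ t → M a b ≤ M a t
  div_mono : ∀ {a b t}, 0 < a → 0 < b → b ≤ t → b / M a b ≤ t / M a t

namespace IsModeratelyIncreasing

variable {M : ℝ → ℝ → ℝ} {a b t u v w : ℝ}

lemma mono_left (hM : IsModeratelyIncreasing M) (ha : 0 < a) (hb : 0 < b) (hat : a ≤ t) :
    M a b ≤ M t b := by
  simpa only [hM.symm _ b] using hM.mono hb ha hat

lemma div_mono_left (hM : IsModeratelyIncreasing M) (ha : 0 < a) (hb : 0 < b) (hat : a ≤ t) :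
    a / M a b ≤ t / M t b := by
  simpa only [hM.symm _ b] using hM.div_mono hb ha hat

lemma div_le_div_add_div_of_le (hM : IsModeratelyIncreasing M) (ht : 0 < t) (htb : t ≤ b)
    (hba : b ≤ a) (hu : 0 ≤ u) (hv : 0 ≤ v) (htri : w ≤ u + v) :
    w / M a b ≤ u / M a t + v / M t b := by
  have hb : 0 < b := ht.trans_le htb
  have ha : 0 < a := hb.trans_le hba
  calc w / M a b ≤ (u + v) / M a b := div_le_div_of_nonneg_right htri (hM.pos ha hb).le
    _ = u / M a b + v / M a b := add_div _ _ _
    _ ≤ u / M a t + v / M t b :=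
      add_le_add (div_le_div_of_nonneg_left hu (hM.pos ha ht) (hM.mono ha ht htb))
        (div_le_div_of_nonneg_left hv (hM.pos ht hb) (hM.mono_left ht hb (htb.trans hba)))

lemma div_le_div_add_div_of_ge (hM : IsModeratelyIncreasing M) (hb : 0 < b) (hba : b ≤ a)
    (hat : a ≤ t) (hu : 0 ≤ u) (hv : 0 ≤ v) (hptolemy : w * t ≤ u * b + v * a) :
    w / M a b ≤ u / M a t + v / M t b := by
  have ha : 0 < a := hb.trans_le hba
  refine le_of_mul_le_mul_right ?_ (ha.trans_le hat)
  calc w / M a b * t = w * t / M a b := div_mul_eq_mul_div _ _ _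
    _ ≤ (u * b + v * a) / M a b := div_le_div_of_nonneg_right hptolemy (hM.pos ha hb).le
    _ = u * (b / M a b) + v * (a / M a b) := by ring
    _ ≤ u * (t / M a t) + v * (t / M t b) :=
      add_le_add (mul_le_mul_of_nonneg_left (hM.div_mono ha hb (hba.trans hat)) hu)
        (mul_le_mul_of_nonneg_left (hM.div_mono_left ha hb hat) hv)
    _ = (u / M a t + v / M t b) * t := by ring

lemma div_le_div_add_div_of_between (hM : IsModeratelyIncreasing M) (hb : 0 < b) (hbt : b < t)
    (hta : t ≤ a) (hv : 0 ≤ v) (htri : w ≤ u + v) (hptolemy : w * t ≤ u * b + v * a)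
    (hline : (a - b) / M a b ≤ (a - t) / M a t + (t - b) / M t b) :
    w / M a b ≤ u / M a t + v / M t b := by
  have ht : 0 < t := hb.trans hbt
  have ha : 0 < a := ht.trans_le hta
  have hαγ : (M a t)⁻¹ ≤ (M a b)⁻¹ := inv_anti₀ (hM.pos ha hb) (hM.mono ha hb hbt.le)
  have hbγ : b / M a b ≤ t / M a t := hM.div_mono ha hb hbt.le
  simp only [div_eq_mul_inv] at hline hbγ ⊢
  generalize (M a t)⁻¹ = α, (M t b)⁻¹ = β, (M a b)⁻¹ = γ at *
  refine le_of_mul_le_mul_left ?_ (sub_pos.2 hbt)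
  -- The weights of the two bounds on `w` are chosen so that the coefficient of `u` comes out exact.
  calc (t - b) * (w * γ) = (t * α - b * γ) * w + (γ - α) * (w * t) := by ring
    _ ≤ (t * α - b * γ) * (u + v) + (γ - α) * (u * b + v * a) :=
      add_le_add (mul_le_mul_of_nonneg_left htri (sub_nonneg.2 hbγ))
        (mul_le_mul_of_nonneg_left hptolemy (sub_nonneg.2 hαγ))
    _ = (t - b) * (u * α) + v * ((a - b) * γ - (a - t) * α) := by ring
    _ ≤ (t - b) * (u * α) + v * ((t - b) * β) := by gcongr; linarith
    _ = (t - b) * (u * α + v * β) := by ring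

theorem isMetricOn_relativeDist {E : Type*} [NormedAddCommGroup E] [InnerProductSpace ℝ E]
    (hM : IsModeratelyIncreasing M)
    (hline : ∀ {a t b}, 0 < b → b ≤ t → t ≤ a →
      (a - b) / M a b ≤ (a - t) / M a t + (t - b) / M t b) :
    IsMetricOn {x : E | x ≠ 0} (relativeDist M) := by
  have weight_pos : ∀ {x y : E}, x ≠ 0 → y ≠ 0 → 0 < M ‖x‖ ‖y‖ := fun hx hy =>
    hM.pos (norm_pos_iff.2 hx) (norm_pos_iff.2 hy)
  have symm : ∀ x y : E, relativeDist M x y = relativeDist M y x := fun x y => by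
    rw [relativeDist, relativeDist, dist_comm, hM.symm]
  refine ⟨fun x hx y hy => div_nonneg dist_nonneg (weight_pos hx hy).le,
    fun x hx y hy => ?_, fun x _ y _ => symm x y, fun x hx y hy z hz => ?_⟩
  · rw [relativeDist, div_eq_zero_iff, or_iff_left (weight_pos hx hy).ne', dist_eq_zero]
  · wlog hyx : ‖y‖ ≤ ‖x‖ generalizing x y
    · rw [symm x y, symm x z, symm z y, add_comm]
      exact this y hy x hx (le_of_not_ge hyx)
    have hy₀ : 0 < ‖y‖ := norm_pos_iff.2 hy
    have hz₀ : 0 < ‖z‖ := norm_pos_iff.2 hz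
    have htri : dist x y ≤ dist x z + dist z y := dist_triangle x z y
    have hptolemy : dist x y * ‖z‖ ≤ dist x z * ‖y‖ + dist z y * ‖x‖ := by
      simpa only [dist_zero_right] using
        EuclideanGeometry.mul_dist_le_mul_dist_add_mul_dist x z y 0
    rcases le_or_gt ‖z‖ ‖y‖ with hzy | hyz
    · exact hM.div_le_div_add_div_of_le hz₀ hzy hyx dist_nonneg dist_nonneg htri
    rcases le_total ‖z‖ ‖x‖ with hzx | hxz
    · exact hM.div_le_div_add_div_of_between hy₀ hyz hzx dist_nonneg htri hptolemy
        (hline hy₀ hyz.le hzx)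
    · exact hM.div_le_div_add_div_of_ge hy₀ hyx hxz dist_nonneg dist_nonneg hptolemy

end IsModeratelyIncreasing

/-- The power mean of exponent `d` of two nonnegative numbers. -/
noncomputable def powerMean (d a b : ℝ) : ℝ := ((a ^ d + b ^ d) / 2) ^ (1 / d)

section PowerMean

variable {d a b t k : ℝ}

lemma powerMean_pos (ha : 0 < a) (hb : 0 < b) : 0 < powerMean d a b := by
  unfold powerMean
  positivity

lemma powerMean_comm (d a b : ℝ) : powerMean d a b = powerMean d b a := by
  rw [powerMean, powerMean, add_comm]

lemma powerMean_le_powerMean_right (hd : 0 < d) (ha : 0 ≤ a) (hb : 0 ≤ b) (hbt : b ≤ t) :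
    powerMean d a b ≤ powerMean d a t := by
  unfold powerMean
  gcongr

lemma powerMean_mul_mul (hd : d ≠ 0) (hk : 0 ≤ k) (ha : 0 ≤ a) (hb : 0 ≤ b) :
    powerMean d (k * a) (k * b) = k * powerMean d a b := by
  rw [powerMean, Real.mul_rpow hk ha, Real.mul_rpow hk hb, ← mul_add, mul_div_assoc,
    Real.mul_rpow (by positivity) (by positivity), ← Real.rpow_mul hk, mul_one_div_cancel hd,
    Real.rpow_one, powerMean]

lemma isModeratelyIncreasing_powerMean (hd : 0 < d) : IsModeratelyIncreasing (powerMean d) where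
  pos := powerMean_pos
  symm := powerMean_comm d
  mono ha hb hbt := powerMean_le_powerMean_right hd ha.le hb.le hbt
  div_mono {a b t} ha hb hbt := by
    have ht : 0 < t := hb.trans_le hbt
    rw [div_le_div_iff₀ (powerMean_pos ha hb) (powerMean_pos ha ht)]
    calc b * powerMean d a t = powerMean d (t * b) (b * a) := by
          rw [← powerMean_mul_mul hd.ne' hb.le ha.le ht.le, powerMean_comm, mul_comm b t]
      _ ≤ powerMean d (t * b) (t * a) :=
          powerMean_le_powerMean_right hd (by positivity) (by positivity) (by gcongr)
      _ = t * powerMean d a b := by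
          rw [powerMean_mul_mul hd.ne' ht.le hb.le ha.le, powerMean_comm]

lemma powerMean_exp (hd : d ≠ 0) (p q : ℝ) :
    powerMean d (Real.exp p) (Real.exp q) =
      Real.exp ((p + q) / 2) * Real.cosh (d * ((p - q) / 2)) ^ (1 / d) := by
  have mean_eq : (Real.exp p ^ d + Real.exp q ^ d) / 2 =
      Real.exp ((p + q) / 2 * d) * Real.cosh (d * ((p - q) / 2)) := by
    rw [Real.cosh_eq, ← Real.exp_mul, ← Real.exp_mul, mul_div_assoc', mul_add, ← Real.exp_add,
      ← Real.exp_add]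
    ring_nf
  rw [powerMean, mean_eq, Real.mul_rpow (Real.exp_pos _).le (Real.cosh_pos _).le,
    ← Real.exp_mul, mul_assoc, mul_one_div_cancel hd, mul_one]

end PowerMean

lemma exp_sub_exp_eq (p q : ℝ) :
    Real.exp p - Real.exp q = 2 * Real.exp ((p + q) / 2) * Real.sinh ((p - q) / 2) := by
  rw [Real.sinh_eq, mul_div_assoc', mul_assoc, mul_div_cancel_left₀ _ two_ne_zero, mul_sub,
    ← Real.exp_add, ← Real.exp_add]
  ring_nf

/-- The relative distance of two points of the half-line with respect to the power mean, as a
function of half the difference of their logarithms and up to a factor `2`; see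
`sub_div_powerMean_exp`. -/
noncomputable def logProfile (d s : ℝ) : ℝ := Real.sinh s * Real.cosh (d * s) ^ (-(1 / d))

section LogProfile

variable {d : ℝ}

lemma sub_div_powerMean_exp (hd : d ≠ 0) (p q : ℝ) :
    (Real.exp p - Real.exp q) / powerMean d (Real.exp p) (Real.exp q) =
      2 * logProfile d ((p - q) / 2) := by
  rw [exp_sub_exp_eq, powerMean_exp hd, logProfile, Real.rpow_neg (Real.cosh_pos _).le]
  field_simp

lemma three_mul_sinh_le_sinh_three_mul {s : ℝ} (hs : 0 ≤ s) :
    3 * Real.sinh s ≤ Real.sinh (3 * s) := by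
  rw [Real.sinh_three_mul]
  have : 0 ≤ Real.sinh s := Real.sinh_nonneg_iff.2 hs
  exact le_add_of_nonneg_left (by positivity)

lemma sinh_one_sub_two_mul_mul_le {s : ℝ} (hd : 1 / 3 ≤ d) (hs : 0 ≤ s) :
    Real.sinh ((1 - 2 * d) * s) ≤ d * Real.sinh s := by
  have hsinh : 0 ≤ Real.sinh s := Real.sinh_nonneg_iff.2 hs
  calc Real.sinh ((1 - 2 * d) * s) ≤ Real.sinh (s / 3) := Real.sinh_le_sinh.2 (by nlinarith)
    _ ≤ 1 / 3 * Real.sinh s := by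
      have h := three_mul_sinh_le_sinh_three_mul (s := s / 3) (by positivity)
      rw [mul_div_cancel₀ s three_ne_zero] at h
      linarith
    _ ≤ d * Real.sinh s := mul_le_mul_of_nonneg_right hd hsinh

lemma hasDerivAt_mul_cosh_rpow {f : ℝ → ℝ} {f' s : ℝ} (hf : HasDerivAt f f' s) (d r : ℝ) :
    HasDerivAt (fun s => f s * Real.cosh (d * s) ^ r)
      ((f' * Real.cosh (d * s) + r * d * f s * Real.sinh (d * s)) *
        Real.cosh (d * s) ^ (r - 1)) s := by
  have hcosh : 0 < Real.cosh (d * s) := Real.cosh_pos _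
  refine (hf.mul ((hasDerivAt_const_mul d).cosh.rpow_const (p := r)
    (Or.inl hcosh.ne'))).congr_deriv ?_
  rw [Real.rpow_sub_one hcosh.ne']
  field_simp

lemma hasDerivAt_logProfile (hd : d ≠ 0) (s : ℝ) :
    HasDerivAt (logProfile d)
      (Real.cosh ((1 - d) * s) * Real.cosh (d * s) ^ (-(1 / d) - 1)) s := by
  refine (hasDerivAt_mul_cosh_rpow (Real.hasDerivAt_sinh s) d (-(1 / d))).congr_deriv ?_
  rw [sub_mul, one_mul, Real.cosh_sub, neg_mul, one_div_mul_cancel hd]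
  ring

lemma hasDerivAt_deriv_logProfile (hd : d ≠ 0) (s : ℝ) :
    HasDerivAt (fun s => Real.cosh ((1 - d) * s) * Real.cosh (d * s) ^ (-(1 / d) - 1))
      ((Real.sinh ((1 - 2 * d) * s) - d * Real.sinh s) *
        Real.cosh (d * s) ^ (-(1 / d) - 1 - 1)) s := by
  refine (hasDerivAt_mul_cosh_rpow (hasDerivAt_const_mul (1 - d)).cosh d _).congr_deriv ?_
  have hsub : (1 - 2 * d) * s = (1 - d) * s - d * s := by ring
  have hadd : Real.sinh s = Real.sinh ((1 - d) * s + d * s) := by ring_nf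
  rw [hsub, hadd, Real.sinh_sub, Real.sinh_add]
  field_simp
  ring

lemma concaveOn_logProfile (hd : 1 / 3 ≤ d) : ConcaveOn ℝ (Ici 0) (logProfile d) := by
  have hd₀ : d ≠ 0 := by linarith
  refine concaveOn_of_hasDerivWithinAt2_nonpos (convex_Ici 0)
    (fun s _ => (hasDerivAt_logProfile hd₀ s).continuousAt.continuousWithinAt)
    (fun s _ => (hasDerivAt_logProfile hd₀ s).hasDerivWithinAt)
    (fun s _ => (hasDerivAt_deriv_logProfile hd₀ s).hasDerivWithinAt) (fun s hs => ?_)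
  exact mul_nonpos_of_nonpos_of_nonneg
    (sub_nonpos.2 (sinh_one_sub_two_mul_mul_le hd (interior_subset hs)))
    (Real.rpow_nonneg (Real.cosh_pos _).le _)

lemma sub_div_powerMean_le_add {a t b : ℝ} (hd : 1 / 3 ≤ d) (hb : 0 < b) (hbt : b ≤ t)
    (hta : t ≤ a) :
    (a - b) / powerMean d a b ≤ (a - t) / powerMean d a t + (t - b) / powerMean d t b := by
  have hd₀ : d ≠ 0 := by linarith
  have ht : 0 < t := hb.trans_le hbt
  obtain ⟨p, rfl⟩ : ∃ p, Real.exp p = a := ⟨_, Real.exp_log (ht.trans_le hta)⟩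
  obtain ⟨r, rfl⟩ : ∃ r, Real.exp r = t := ⟨_, Real.exp_log ht⟩
  obtain ⟨q, rfl⟩ : ∃ q, Real.exp q = b := ⟨_, Real.exp_log hb⟩
  rw [Real.exp_le_exp] at hbt hta
  have hadd : logProfile d ((p - r) / 2 + (r - q) / 2) ≤
      logProfile d ((p - r) / 2) + logProfile d ((r - q) / 2) :=
    map_add_le_of_concaveOn (concaveOn_logProfile hd) (by simp [logProfile]) (by linarith)
      (by linarith)
  rw [← add_div, sub_add_sub_cancel] at hadd
  simp only [sub_div_powerMean_exp hd₀]
  linarith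

end LogProfile

theorem isMetricOn_relativeDist_powerMean {E : Type*} [NormedAddCommGroup E]
    [InnerProductSpace ℝ E] {d : ℝ} (hd : 1 / 3 ≤ d) :
    IsMetricOn {x : E | x ≠ 0} (relativeDist (powerMean d)) :=
  (isModeratelyIncreasing_powerMean (by linarith)).isMetricOn_relativeDist
    (sub_div_powerMean_le_add hd)

theorem stmt7_general {E : Type*} [NormedAddCommGroup E] [InnerProductSpace ℝ E] {c d : ℝ}
    (hc : 0 < c) (hd : 1 / 3 ≤ d) :
    IsMetricOn {x : E | x ≠ 0}
      (fun x y =>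
        Real.log (1 + dist x y / (c * ((‖x‖ ^ d + ‖y‖ ^ d) / 2) ^ (1 / d)))) ∧
    IsMetricOn {x : E | x ≠ 0}
      (fun x y =>
        dist x y / (dist x y + 2 * c * ((‖x‖ ^ d + ‖y‖ ^ d) / 2) ^ (1 / d))) := by
  have hρ : IsMetricOn {x : E | x ≠ 0} (relativeDist (powerMean d)) :=
    isMetricOn_relativeDist_powerMean hd
  refine ⟨(hρ.log_one_add_div hc).congr fun x _ y _ => ?_,
    (hρ.div_add_const (k := 2 * c) (by positivity)).congr fun x hx y hy => ?_⟩
  · rw [relativeDist, powerMean, div_div, mul_comm c]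
  · have hmean : 0 < powerMean d ‖x‖ ‖y‖ := powerMean_pos (norm_pos_iff.2 hx) (norm_pos_iff.2 hy)
    rw [relativeDist, ← powerMean]
    field_simp

theorem stmt7 (n : ℕ) (hn : 2 ≤ n) (c d : ℝ) (hc : 0 < c) (hd : 1 / 3 ≤ d) :
    IsMetricOn {x : EuclideanSpace ℝ (Fin n) | x ≠ 0}
      (fun x y =>
        Real.log (1 + dist x y / (c * ((‖x‖ ^ d + ‖y‖ ^ d) / 2) ^ (1 / d)))) ∧
    IsMetricOn {x : EuclideanSpace ℝ (Fin n) | x ≠ 0}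
      (fun x y =>
        dist x y / (dist x y + 2 * c * ((‖x‖ ^ d + ‖y‖ ^ d) / 2) ^ (1 / d))) :=
  stmt7_general hc hd
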